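/- Let A be a CLO with more than one element. The following are equivalent: (i) the only convex subsets of A definable without parameters are ∅ and A; (ii) for every nonempty linear order (J,<) and every family of CLOs A_j (j ∈ J) with A_j elementarily equivalent to A, each canonical embedding A_j → Σ_{j∈J} A_j is an elementary embedding (in particular, Σ_{j∈J} A_j is elementarily equivalent to A). -/

import Mathlib

open FirstOrder Language Set

/-- Relation symbols of the language `L_κ` of colored linear orders:
a binary `<` and a unary color predicate for each `i : ι`. -/
inductive CLORel (ι : Type) : ℕ → Type
  | lt : CLORel ι 2
  | color (i : ι) : CLORel ι 1

/-- The language `L_κ`, where the colors are indexed by `ι`. -/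
def CLOLang (ι : Type) : Language :=
  ⟨fun _ => Empty, CLORel ι⟩

/-- Interpretation of the relation symbols on a linear order `M` with colors `c`. -/
def cloRelMap {ι M : Type} [LinearOrder M] (c : ι → Set M) :
    ∀ {n}, CLORel ι n → (Fin n → M) → Prop
  | _, .lt => fun v => v 0 < v 1
  | _, .color i => fun v => v 0 ∈ c i

/-- The canonical `L_κ`-structure (a colored linear order, CLO) on a linear
order `M` whose colors are given by `c : ι → Set M`. -/
def CLOStr (ι M : Type) [LinearOrder M] (c : ι → Set M) : (CLOLang ι).Structure M where
  funMap := fun f => Empty.elim f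
  RelMap := cloRelMap c

/-- Satisfaction of an `L_κ`-formula in the CLO `(M, <, c)`. -/
def Sat {ι : Type} (M : Type) [LinearOrder M] (c : ι → Set M) {α : Type}
    (φ : (CLOLang ι).Formula α) (v : α → M) : Prop :=
  letI := CLOStr ι M c
  φ.Realize v

/-- The induced colors on a subset of a CLO. -/
def subColor {ι M : Type} (c : ι → Set M) (s : Set M) : ι → Set s :=
  fun i => {x | (x : M) ∈ c i}

/-- Elementary equivalence of CLOs. -/
def CLOEquiv (ι : Type) (M : Type) [LinearOrder M] (cM : ι → Set M)
    (N : Type) [LinearOrder N] (cN : ι → Set N) : Prop :=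
  letI := CLOStr ι M cM
  letI := CLOStr ι N cN
  M ≅[CLOLang ι] N

/-- Isomorphism of CLOs (as `L_κ`-structures). -/
def CLOIso (ι : Type) (M : Type) [LinearOrder M] (cM : ι → Set M)
    (N : Type) [LinearOrder N] (cN : ι → Set N) : Prop :=
  letI := CLOStr ι M cM
  letI := CLOStr ι N cN
  Nonempty (M ≃[CLOLang ι] N)

/-- The complete theory of a CLO. -/
def CLOTheory (ι : Type) (M : Type) [LinearOrder M] (c : ι → Set M) : (CLOLang ι).Theory :=
  letI := CLOStr ι M c
  (CLOLang ι).completeTheory M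

/-- The induced colors on a lexicographic sum `Σₗ i, A i` of CLOs. -/
def sigmaColor {ι I : Type} {A : I → Type} (c : ∀ i, ι → Set (A i)) :
    ι → Set (Σₗ i, A i) :=
  fun k => {x | (ofLex x).2 ∈ c (ofLex x).1 k}

/-- The induced colors on a two-term lexicographic sum `α ⊕ₗ β` of CLOs. -/
def sumColor2 {ι α β : Type} (ca : ι → Set α) (cb : ι → Set β) : ι → Set (α ⊕ₗ β) :=
  fun k => {x | Sum.elim (· ∈ ca k) (· ∈ cb k) (ofLex x)}

/-- The set defined by a parameter-free formula in one variable in a CLO. -/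
def FmlSet (ι : Type) (M : Type) [LinearOrder M] (c : ι → Set M)
    (φ : (CLOLang ι).Formula Unit) : Set M :=
  {x | Sat M c φ fun _ => x}

/-- A CLO is self-additive if it has more than one point and its only
convex parameter-free-definable subsets are `∅` and the whole order. -/
def SelfAdditive (ι : Type) (M : Type) [LinearOrder M] (c : ι → Set M) : Prop :=
  Nontrivial M ∧
    ∀ φ : (CLOLang ι).Formula Unit, (FmlSet ι M c φ).OrdConnected →
      FmlSet ι M c φ = ∅ ∨ FmlSet ι M c φ = Set.univ

/-- `a ∼ b`: some set definable with parameter `a` is convex, bounded above and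
below, and contains both `a` and `b`. -/
def SimRel (ι : Type) {M : Type} [LinearOrder M] (c : ι → Set M) (a b : M) : Prop :=
  ∃ φ : (CLOLang ι).Formula (Unit ⊕ Unit),
    (Set.OrdConnected {x | Sat M c φ (Sum.elim (fun _ => x) fun _ => a)}) ∧
    (∃ u : M, ∀ z ∈ {x | Sat M c φ (Sum.elim (fun _ => x) fun _ => a)}, z < u) ∧
    (∃ l : M, ∀ z ∈ {x | Sat M c φ (Sum.elim (fun _ => x) fun _ => a)}, l < z) ∧
    a ∈ {x | Sat M c φ (Sum.elim (fun _ => x) fun _ => a)} ∧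
    b ∈ {x | Sat M c φ (Sum.elim (fun _ => x) fun _ => a)}

/-- `f : M → N` is an elementary map of CLOs. -/
def IsElemMap (ι : Type) {M N : Type} [LinearOrder M] [LinearOrder N]
    (cM : ι → Set M) (cN : ι → Set N) (f : M → N) : Prop :=
  ∀ (k : ℕ) (φ : (CLOLang ι).Formula (Fin k)) (v : Fin k → M),
    Sat M cM φ v ↔ Sat N cN φ (f ∘ v)

/-- A subset of a CLO, with its induced structure, is an elementary substructure. -/
def IsElemSubset (ι : Type) (B : Type) [LinearOrder B] (cB : ι → Set B) (s : Set B) : Prop :=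
  IsElemMap ι (subColor cB s) cB (Subtype.val : s → B)

/-- A complete `L_κ`-theory is ℵ₀-categorical: any two at-most-countable CLO
models of it are isomorphic.  (Finite and empty models are allowed.) -/
def Aleph0CatTheory (ι : Type) (T : (CLOLang ι).Theory) : Prop :=
  ∀ (N₁ N₂ : Type) (i₁ : LinearOrder N₁) (i₂ : LinearOrder N₂)
    (c₁ : ι → Set N₁) (c₂ : ι → Set N₂),
    Countable N₁ → Countable N₂ →
    (letI := i₁; CLOTheory ι N₁ c₁) = T → (letI := i₂; CLOTheory ι N₂ c₂) = T →
    (letI := i₁; letI := i₂; CLOIso ι N₁ c₁ N₂ c₂)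

/-- `φ` is a convex formula for the complete theory of the CLO `(M₀, c₀)`:
its realizations in every model of that theory form a convex set. -/
def ConvexFml (ι : Type) (M₀ : Type) [LinearOrder M₀] (c₀ : ι → Set M₀)
    (φ : (CLOLang ι).Formula Unit) : Prop :=
  ∀ (B : Type) (iB : LinearOrder B) (cB : ι → Set B),
    (letI := iB; CLOEquiv ι B cB M₀ c₀) → (letI := iB; Set.OrdConnected (FmlSet ι B cB φ))

/-- The set of common realizations of a set of one-variable formulas in a CLO. -/
def TypeSet (ι : Type) (M : Type) [LinearOrder M] (c : ι → Set M)
    (Φ : Set ((CLOLang ι).Formula Unit)) : Set M :=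
  {x | ∀ φ ∈ Φ, Sat M c φ fun _ => x}

/-- A set of one-variable formulas is consistent with the complete theory of
`(M₀, c₀)`: it is realized in some model of that theory. -/
def TypeConsistent (ι : Type) (M₀ : Type) [LinearOrder M₀] (c₀ : ι → Set M₀)
    (Φ : Set ((CLOLang ι).Formula Unit)) : Prop :=
  ∃ (B : Type) (iB : LinearOrder B) (cB : ι → Set B),
    (letI := iB; CLOEquiv ι B cB M₀ c₀) ∧ (letI := iB; ∃ b : B, b ∈ TypeSet ι B cB Φ)

/-- `Φ` is a convex type of the complete theory of `(M₀, c₀)`: a maximal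
consistent set of convex formulas over `∅`.  `IT(T)` is the set of all such. -/
def IsConvexType (ι : Type) (M₀ : Type) [LinearOrder M₀] (c₀ : ι → Set M₀)
    (Φ : Set ((CLOLang ι).Formula Unit)) : Prop :=
  (∀ φ ∈ Φ, ConvexFml ι M₀ c₀ φ) ∧ TypeConsistent ι M₀ c₀ Φ ∧
    ∀ ψ, ConvexFml ι M₀ c₀ ψ → TypeConsistent ι M₀ c₀ (insert ψ Φ) → ψ ∈ Φ

/-- A convex type is isolated if it contains a convex formula contained in no
other convex type. -/
def IsolatedCT (ι : Type) (M₀ : Type) [LinearOrder M₀] (c₀ : ι → Set M₀)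
    (Φ : Set ((CLOLang ι).Formula Unit)) : Prop :=
  ∃ φ ∈ Φ, ConvexFml ι M₀ c₀ φ ∧
    ∀ Ψ, IsConvexType ι M₀ c₀ Ψ → φ ∈ Ψ → Ψ = Φ

/-- A CLO is ℵ₀-saturated: every finitely-satisfiable set of formulas in one
variable over finitely many parameters is realized. -/
def Aleph0Saturated (ι : Type) (S : Type) [LinearOrder S] (cS : ι → Set S) : Prop :=
  ∀ (m : ℕ) (a : Fin m → S) (p : Set ((CLOLang ι).Formula (Unit ⊕ Fin m))),
    (∀ q : Finset ((CLOLang ι).Formula (Unit ⊕ Fin m)), ↑q ⊆ p →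
      ∃ x : S, ∀ φ ∈ q, Sat S cS φ (Sum.elim (fun _ => x) a)) →
    ∃ x : S, ∀ φ ∈ p, Sat S cS φ (Sum.elim (fun _ => x) a)

/-- A CLO is strongly ℵ₀-homogeneous: finite tuples with the same complete type
are conjugate under an automorphism. -/
def StronglyAleph0Homogeneous (ι : Type) (S : Type) [LinearOrder S] (cS : ι → Set S) : Prop :=
  ∀ (m : ℕ) (a b : Fin m → S),
    (∀ φ : (CLOLang ι).Formula (Fin m), Sat S cS φ a ↔ Sat S cS φ b) →
    ∃ g : S ≃ S, (∀ x y : S, x < y ↔ g x < g y) ∧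
      (∀ (k : ι) (x : S), x ∈ cS k ↔ g x ∈ cS k) ∧ ∀ i, g (a i) = b i

/-- Sufficiently saturated: ℵ₀-saturated and strongly ℵ₀-homogeneous. -/
def SuffSaturated (ι : Type) (S : Type) [LinearOrder S] (cS : ι → Set S) : Prop :=
  Aleph0Saturated ι S cS ∧ StronglyAleph0Homogeneous ι S cS

/-- The complete theory of `(M₀, c₀)` is locally simple: for every sufficiently
saturated model `S` and every convex type `Φ`, the theory `T_Φ = Th(Φ(S))` is
ℵ₀-categorical. -/
def LocallySimple (ι : Type) (M₀ : Type) [LinearOrder M₀] (c₀ : ι → Set M₀) : Prop :=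
  ∀ (S : Type) [LinearOrder S], ∀ (cS : ι → Set S),
    CLOEquiv ι S cS M₀ c₀ → SuffSaturated ι S cS →
    ∀ Φ, IsConvexType ι M₀ c₀ Φ →
      Aleph0CatTheory ι
        (CLOTheory ι (TypeSet ι S cS Φ) (subColor cS (TypeSet ι S cS Φ)))

/-- A finite set of pairs is a partial isomorphism of CLOs: it preserves `<`,
equality, and each color, in both directions. -/
def IsPartialIso (ι : Type) {M N : Type} [LinearOrder M] [LinearOrder N]
    (cM : ι → Set M) (cN : ι → Set N) (f : Finset (M × N)) : Prop :=
  ∀ p ∈ f, ∀ q ∈ f,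
    (p.1 < q.1 ↔ p.2 < q.2) ∧ (p.1 = q.1 ↔ p.2 = q.2) ∧
    ∀ k, p.1 ∈ cM k ↔ p.2 ∈ cN k

/-- Back-and-forth equivalence of CLOs: a nonempty family of finite partial
isomorphisms with the back-and-forth extension properties. -/
def BackForthEquiv (ι : Type) (M : Type) [LinearOrder M] (cM : ι → Set M)
    (N : Type) [LinearOrder N] (cN : ι → Set N) : Prop :=
  ∃ F : Set (Finset (M × N)), F.Nonempty ∧ (∀ f ∈ F, IsPartialIso ι cM cN f) ∧
    (∀ f ∈ F, ∀ m : M, ∃ g ∈ F, f ⊆ g ∧ ∃ n : N, (m, n) ∈ g) ∧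
    (∀ f ∈ F, ∀ n : N, ∃ g ∈ F, f ⊆ g ∧ ∃ m : M, (m, n) ∈ g)

/-- The set of complete theories `Th(Φ(A))` as `A` ranges over models of the
complete theory of `(M₀, c₀)` (including the theory of the empty structure,
in case `Φ` is omitted). -/
def TheoriesAt (ι : Type) (M₀ : Type) [LinearOrder M₀] (c₀ : ι → Set M₀)
    (Φ : Set ((CLOLang ι).Formula Unit)) : Set ((CLOLang ι).Theory) :=
  {T | ∃ (A : Type) (iA : LinearOrder A) (cA : ι → Set A),
    (letI := iA; CLOEquiv ι A cA M₀ c₀) ∧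
    T = (letI := iA; CLOTheory ι (TypeSet ι A cA Φ) (subColor cA (TypeSet ι A cA Φ)))}

/-!
The rank `n` type of a colored linear order, its class for the `n`-round Ehrenfeucht–Fraïssé game,
is additive over sums. In a self-additive order each rank `n` type of a point is realized
arbitrarily far above and below any given point: the points with a realization beyond them form a
nonempty convex definable set, hence are all points. If `z` lies far enough above `a`, then the
interval `(a, z)` has the same rank `n` type as the sum of the rays `(a, ∞)` and `(-∞, z)`, because
each of its points is far from one of the ends. Now a point in another summand looks, seen from `a`,
like a far point of the summand of `a`; by induction on `n`, the rays at `a` in its summand and in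
the whole sum have the same types. A tuple in one summand splits the sum into two such rays and an
interval inside the summand, so its type does not change either.

Conversely, if both embeddings of `M` into `M + M` are elementary, then a convex definable set
containing `a` also contains, in `M + M`, both copies of `a` and everything in between: the part
above `a` in the first copy and the part below `a` in the second.
-/

universe u v w z

section RankType

variable {C : Type u} {D : Type z}

/-- Rank `n` types of linear orders colored by `C`, that is, their equivalence classes for the
`n`-round Ehrenfeucht–Fraïssé game. -/
def RankType (C : Type u) : ℕ → Type u
  | 0 => PUnit
  | n + 1 => Set (C × RankType C n × RankType C n)

/-- Rank `n` types of a point in a colored linear order: its color and the rank `n` types of the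
parts below and above it. -/
abbrev PointType (C : Type u) (n : ℕ) : Type u := C × RankType C n × RankType C n

namespace RankType

instance finite [Finite C] (n : ℕ) : Finite (RankType C n) := by
  induction n with
  | zero => exact inferInstanceAs (Finite PUnit)
  | succ n ih => exact inferInstanceAs (Finite (Set (PointType C n)))

/-- The rank `n` type determined by a rank `n + 1` type. -/
def trunc : ∀ {n : ℕ}, RankType C (n + 1) → RankType C n
  | 0, _ => ⟨⟩
  | n + 1, σ => Prod.map id (Prod.map trunc trunc) '' (σ : Set (PointType C (n + 1)))

/-- The effect of a change of colors on rank `n` types. -/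
def map (h : C → D) : ∀ {n : ℕ}, RankType C n → RankType D n
  | 0, _ => ⟨⟩
  | n + 1, σ => Prod.map h (Prod.map (map h) (map h)) '' (σ : Set (PointType C n))

/-- The rank `n` type of a sum of two colored linear orders in terms of those of the summands. -/
protected def add : ∀ {n : ℕ}, RankType C n → RankType C n → RankType C n
  | 0, _, _ => ⟨⟩
  | n + 1, σ, τ =>
    ((fun p => (p.1, p.2.1, p.2.2.add τ.trunc)) '' (σ : Set (PointType C n)) ∪
      (fun p => (p.1, σ.trunc.add p.2.1, p.2.2)) '' (τ : Set (PointType C n)) :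
        Set (PointType C n))

instance {n : ℕ} : Add (RankType C n) := ⟨RankType.add⟩

end RankType

namespace PointType

variable {n : ℕ}

/-- The type of a point after a part of type `σ` is added below everything. -/
def addBelow (σ : RankType C n) (p : PointType C n) : PointType C n := (p.1, σ + p.2.1, p.2.2)

/-- The type of a point after a part of type `τ` is added above everything. -/
def addAbove (τ : RankType C n) (p : PointType C n) : PointType C n := (p.1, p.2.1, p.2.2 + τ)

end PointType

theorem RankType.add_succ {n : ℕ} (σ τ : RankType C (n + 1)) :
    σ + τ = (PointType.addAbove τ.trunc '' (σ : Set (PointType C n)) ∪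
      PointType.addBelow σ.trunc '' (τ : Set (PointType C n)) : Set (PointType C n)) := rfl

variable {X : Type v} {Y : Type w} [LinearOrder X] [LinearOrder Y]

/-- The rank `n` type of a subset of a colored linear order. -/
def rankType (f : X → C) : ∀ n : ℕ, Set X → RankType C n
  | 0, _ => ⟨⟩
  | n + 1, s => (fun x => (f x, rankType f n (s ∩ Iio x), rankType f n (s ∩ Ioi x))) '' s

/-- The rank `n` type of the point `x` in the subset `s` of a colored linear order. -/
def pointType (f : X → C) (n : ℕ) (s : Set X) (x : X) : PointType C n :=
  (f x, rankType f n (s ∩ Iio x), rankType f n (s ∩ Ioi x))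

variable {f : X → C} {g : Y → C} {n : ℕ} {s t : Set X} {a b x z : X}

theorem rankType_succ : rankType f (n + 1) s = pointType f n s '' s := rfl

theorem exists_pointType_eq {t : Set Y} (h : rankType f (n + 1) s = rankType g (n + 1) t)
    (hx : x ∈ s) : ∃ y ∈ t, pointType g n t y = pointType f n s x := by
  have hmem : pointType f n s x ∈ pointType f n s '' s := mem_image_of_mem _ hx
  rwa [← rankType_succ, h] at hmem

theorem pointType_univ : pointType f n univ x = (f x, rankType f n (Iio x), rankType f n (Ioi x)) :=
  by simp only [pointType, univ_inter]

theorem pointType_Ioi_inter (hx : a ≤ x) (t : Set X) : pointType f n (Ioi a ∩ t) x =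
    (f x, rankType f n (Ioo a x ∩ t), rankType f n (Ioi x ∩ t)) := by
  rw [pointType, inter_right_comm, Ioi_inter_Iio, inter_right_comm, Ioi_inter_Ioi,
    max_eq_right hx]

theorem pointType_Iio_inter (hx : x ≤ z) (t : Set X) : pointType f n (Iio z ∩ t) x =
    (f x, rankType f n (Iio x ∩ t), rankType f n (Ioo x z ∩ t)) := by
  rw [pointType, inter_right_comm, Iio_inter_Iio, min_eq_right hx, inter_right_comm,
    Iio_inter_Ioi]

theorem pointType_Ioi (hx : a ≤ x) :
    pointType f n (Ioi a) x = (f x, rankType f n (Ioo a x), rankType f n (Ioi x)) := by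
  simpa only [inter_univ] using pointType_Ioi_inter hx univ

theorem pointType_Iio (hx : x ≤ z) :
    pointType f n (Iio z) x = (f x, rankType f n (Iio x), rankType f n (Ioo x z)) := by
  simpa only [inter_univ] using pointType_Iio_inter hx univ

theorem pointType_Ioo (ha : a ≤ x) (hz : x ≤ z) :
    pointType f n (Ioo a z) x = (f x, rankType f n (Ioo a x), rankType f n (Ioo x z)) := by
  rw [← Ioi_inter_Iio, pointType_Ioi_inter ha, Ioi_inter_Iio, Ioo_inter_Iio, min_eq_left hz]

theorem trunc_rankType (n : ℕ) (s : Set X) : (rankType f (n + 1) s).trunc = rankType f n s := by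
  induction n generalizing s with
  | zero => rfl
  | succ n ih =>
    refine (image_image ..).trans (image_congr fun x _ => ?_)
    simp only [Prod.map_apply, ih, id]

theorem rankType_map {f' : X → D} {h : C → D} (n : ℕ) {s : Set X} (hf : EqOn f' (h ∘ f) s) :
    rankType f' n s = (rankType f n s).map h := by
  induction n generalizing s with
  | zero => rfl
  | succ n ih =>
    refine (image_congr fun x hx => ?_).trans (image_image ..).symm
    rw [hf hx, ih (hf.mono inter_subset_left), ih (hf.mono inter_subset_left)]
    rfl

theorem rankType_image {e : X → Y} (he : StrictMono e) (n : ℕ) (s : Set X) :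
    rankType g n (e '' s) = rankType (g ∘ e) n s := by
  induction n generalizing s with
  | zero => rfl
  | succ n ih =>
    refine (image_image ..).trans (image_congr fun x _ => ?_)
    have hlo : e '' s ∩ Iio (e x) = e '' (s ∩ Iio x) := by
      rw [← image_inter_preimage]; congr 2; ext y; exact he.lt_iff_lt
    have hhi : e '' s ∩ Ioi (e x) = e '' (s ∩ Ioi x) := by
      rw [← image_inter_preimage]; congr 2; ext y; exact he.lt_iff_lt
    rw [hlo, hhi, ih, ih]
    rfl

theorem rankType_singleton_congr {x : X} {y : Y} (h : f x = g y) :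
    rankType f n {x} = rankType g n {y} := by
  have hx := rankType_image (g := f) (Subsingleton.strictMono fun _ : Unit => x) n univ
  have hy := rankType_image (g := g) (Subsingleton.strictMono fun _ : Unit => y) n univ
  simp only [image_univ, range_const, Function.comp_def] at hx hy
  rw [hx, hy, h]

theorem pointType_union_of_subset_Ioi (ht : t ⊆ Ioi x) : pointType f n (s ∪ t) x =
    (f x, rankType f n (s ∩ Iio x), rankType f n (s ∩ Ioi x ∪ t)) := by
  have htx : t ∩ Iio x = ∅ := eq_empty_of_forall_notMem fun y hy => lt_asymm (ht hy.1) hy.2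
  rw [pointType, union_inter_distrib_right, htx, union_empty, union_inter_distrib_right,
    inter_eq_left.2 ht]

theorem pointType_union_of_subset_Iio (hs : s ⊆ Iio x) : pointType f n (s ∪ t) x =
    (f x, rankType f n (s ∪ t ∩ Iio x), rankType f n (t ∩ Ioi x)) := by
  have hsx : s ∩ Ioi x = ∅ := eq_empty_of_forall_notMem fun y hy => lt_asymm (hs hy.1) hy.2
  rw [pointType, union_inter_distrib_right, inter_eq_left.2 hs, union_inter_distrib_right, hsx,
    empty_union]

theorem rankType_union (n : ℕ) {s t : Set X} (hst : ∀ a ∈ s, ∀ b ∈ t, a < b) :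
    rankType f n (s ∪ t) = rankType f n s + rankType f n t := by
  induction n generalizing s t with
  | zero => rfl
  | succ n ih =>
    rw [rankType_succ, image_union, RankType.add_succ, trunc_rankType, trunc_rankType]
    refine congr_arg₂ (fun p q : Set (PointType C n) => p ∪ q)
      (.trans (image_congr fun x hx => ?_) (image_image ..).symm)
      (.trans (image_congr fun x hx => ?_) (image_image ..).symm)
    · rw [pointType_union_of_subset_Ioi (hst x hx), ih fun a ha => hst a ha.1]
      rfl
    · rw [pointType_union_of_subset_Iio fun a ha => hst a ha x hx,
        ih fun a ha b hb => hst a ha b hb.1]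
      rfl

theorem pointType_union_left (hst : ∀ a ∈ s, ∀ b ∈ t, a < b) (hx : x ∈ s) :
    pointType f n (s ∪ t) x = (pointType f n s x).addAbove (rankType f n t) := by
  rw [pointType_union_of_subset_Ioi (hst x hx), rankType_union n fun a ha => hst a ha.1]
  rfl

theorem pointType_union_right (hst : ∀ a ∈ s, ∀ b ∈ t, a < b) (hx : x ∈ t) :
    pointType f n (s ∪ t) x = (pointType f n t x).addBelow (rankType f n s) := by
  rw [pointType_union_of_subset_Iio fun a ha => hst a ha x hx,
    rankType_union n fun a ha b hb => hst a ha b hb.1]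
  rfl

theorem rankType_univ_eq_add (hab : a ≤ z) : rankType f n univ =
    rankType f n (Iio a) + rankType f n (Icc a z) + rankType f n (Ioi z) := by
  have hlt : ∀ x ∈ Iic z, ∀ y ∈ Ioi z, x < y := fun _ hx _ hy => lt_of_le_of_lt hx hy
  have hlt' : ∀ x ∈ Iio a, ∀ y ∈ Icc a z, x < y := fun _ hx _ hy => lt_of_lt_of_le hx hy.1
  rw [← rankType_union n hlt', Iio_union_Icc_eq_Iic hab, ← rankType_union n hlt, Iic_union_Ioi]

end RankType

section FarBelow

variable {C : Type u} {X : Type v} [LinearOrder X] {f : X → C} {n : ℕ} {p s t : Set X}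
  {a a' u w x z z' : X}

/-- `t` represents `s` if every rank `n` type of a point in `s` is the type in `s` of a point
of `t`. -/
def Represents (f : X → C) (n : ℕ) (t s : Set X) : Prop :=
  pointType f n s '' s ⊆ pointType f n s '' t

namespace Represents

theorem mono {t' : Set X} (h : Represents f n t s) (htt' : t ⊆ t') : Represents f n t' s :=
  Subset.trans h (image_mono htt')

theorem union_left (h : Represents f n t s) (hts : t ⊆ s) (hps : ∀ x ∈ p, ∀ y ∈ s, x < y) :
    Represents f n (p ∪ t) (p ∪ s) := by
  rintro _ ⟨x, hx | hx, rfl⟩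
  · exact ⟨x, .inl hx, rfl⟩
  · obtain ⟨y, hy, hyx⟩ := h ⟨x, hx, rfl⟩
    exact ⟨y, .inr hy, by
      rw [pointType_union_right hps hx, pointType_union_right hps (hts hy), hyx]⟩

theorem union_right (h : Represents f n t s) (hts : t ⊆ s) (hsp : ∀ x ∈ s, ∀ y ∈ p, x < y) :
    Represents f n (t ∪ p) (s ∪ p) := by
  rintro _ ⟨x, hx | hx, rfl⟩
  · obtain ⟨y, hy, hyx⟩ := h ⟨x, hx, rfl⟩
    exact ⟨y, .inl hy, by
      rw [pointType_union_left hsp hx, pointType_union_left hsp (hts hy), hyx]⟩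
  · exact ⟨x, .inr hx, rfl⟩

theorem Ioi_mono (h : Represents f n (Ioo a u) (Ioi a)) (hau : a < u) (ha : a' ≤ a) :
    Represents f n (Ioo a' u) (Ioi a') := by
  rw [← Ioc_union_Ioo_eq_Ioo ha hau, ← Ioc_union_Ioi_eq_Ioi ha]
  exact h.union_left Ioo_subset_Ioi_self fun x hx y hy => lt_of_le_of_lt hx.2 hy

theorem Iio_mono (h : Represents f n (Ioo w z) (Iio z)) (hwz : w < z) (hz : z ≤ z') :
    Represents f n (Ioo w z') (Iio z') := by
  rw [← Ioo_union_Ico_eq_Ioo hwz hz, ← Iio_union_Ico_eq_Iio hz]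
  exact h.union_right Ioo_subset_Iio_self fun x hx y hy => lt_of_lt_of_le hx hy.1

end Represents

theorem exists_finite_represents [Finite C] (f : X → C) (n : ℕ) (s : Set X) :
    ∃ t ⊆ s, t.Finite ∧ Represents f n t s := by
  obtain ⟨t, hts, ht, hst⟩ := exists_subset_image_finite_and.1
    ⟨pointType f n s '' s, Subset.rfl, toFinite _, Subset.rfl⟩
  exact ⟨t, hts, ht, hst⟩

theorem exists_gt_represents_Ioo [Finite C] [NoMaxOrder X] (f : X → C) (n : ℕ) (a : X) :
    ∃ u, a < u ∧ Represents f n (Ioo a u) (Ioi a) := by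
  obtain ⟨t, hta, ht, hrep⟩ := exists_finite_represents f n (Ioi a)
  have : Nonempty X := ⟨a⟩
  obtain ⟨b, hb⟩ := ht.bddAbove
  obtain ⟨u, hu⟩ := exists_gt (max a b)
  rw [max_lt_iff] at hu
  exact ⟨u, hu.1, hrep.mono fun x hx => ⟨hta hx, (hb hx).trans_lt hu.2⟩⟩

theorem exists_lt_represents_Ioo [Finite C] [NoMinOrder X] (f : X → C) (n : ℕ) (z : X) :
    ∃ w, w < z ∧ Represents f n (Ioo w z) (Iio z) := by
  obtain ⟨t, htz, ht, hrep⟩ := exists_finite_represents f n (Iio z)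
  have : Nonempty X := ⟨z⟩
  obtain ⟨b, hb⟩ := ht.bddBelow
  obtain ⟨w, hw⟩ := exists_lt (min z b)
  rw [lt_min_iff] at hw
  exact ⟨w, hw.1, hrep.mono fun x hx => ⟨hw.2.trans_le (hb hx), htz hx⟩⟩

/-- `z` lies so far above `a` that, up to rank `n`, the interval between them is indistinguishable
from the sum of the ray above `a` and the ray below `z`. The recursion makes room for each ray to
show all its points of lower rank and then twice a far gap of lower rank. -/
def FarBelow (f : X → C) : ℕ → X → X → Prop
  | 0, a, z => a < z
  | n + 1, a, z => ∃ u v w, (a < u ∧ Represents f n (Ioo a u) (Ioi a)) ∧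
      (FarBelow f n u v ∧ FarBelow f n v w) ∧ w < z ∧ Represents f n (Ioo w z) (Iio z)

namespace FarBelow

theorem lt (h : FarBelow f n a z) : a < z := by
  induction n generalizing a z with
  | zero => exact h
  | succ n ih =>
    obtain ⟨u, v, w, ⟨hau, -⟩, ⟨huv, hvw⟩, hwz, -⟩ := h
    exact hau.trans <| (ih huv).trans <| (ih hvw).trans hwz

theorem mono (h : FarBelow f n a z) (ha : a' ≤ a) (hz : z ≤ z') : FarBelow f n a' z' := by
  cases n with
  | zero => exact (ha.trans_lt h).trans_le hz
  | succ n =>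
    obtain ⟨u, v, w, ⟨hau, hu⟩, huvw, hwz, hw⟩ := h
    exact ⟨u, v, w, ⟨ha.trans_lt hau, hu.Ioi_mono hau ha⟩, huvw,
      hwz.trans_le hz, hw.Iio_mono hwz hz⟩

/-- Every point of `Ioo a z` is far from `a` or far from `z`, so induction on the rank splits
one of the two intervals into which it cuts `Ioo a z`. -/
theorem rankType_Ioo (h : FarBelow f n a z) :
    rankType f n (Ioo a z) = rankType f n (Ioi a) + rankType f n (Iio z) := by
  induction n generalizing a z with
  | zero => rfl
  | succ n ih =>
    have near_left {x : X} (hax : a < x) (hxz : FarBelow f n x z) : pointType f n (Ioo a z) x =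
        (pointType f n (Ioi a) x).addAbove (rankType f n (Iio z)) := by
      rw [pointType_Ioo hax.le hxz.lt.le, ih hxz, pointType_Ioi hax.le]
      rfl
    have near_right {x : X} (hxz : x < z) (hax : FarBelow f n a x) : pointType f n (Ioo a z) x =
        (pointType f n (Iio z) x).addBelow (rankType f n (Ioi a)) := by
      rw [pointType_Ioo hax.lt.le hxz.le, ih hax, pointType_Iio hxz.le]
      rfl
    obtain ⟨u, v, w, ⟨hau, hu⟩, ⟨huv, hvw⟩, hwz, hw⟩ := h
    have hav : FarBelow f n a v := huv.mono hau.le le_rfl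
    have hvz : FarBelow f n v z := hvw.mono le_rfl hwz.le
    rw [rankType_succ, RankType.add_succ, trunc_rankType, trunc_rankType]
    refine Subset.antisymm ?_ (union_subset ?_ ?_)
    · rintro _ ⟨x, ⟨hax, hxz⟩, rfl⟩
      rcases le_total x v with hxv | hvx
      · exact .inl ⟨_, ⟨x, hax, rfl⟩, (near_left hax (hvz.mono hxv le_rfl)).symm⟩
      · exact .inr ⟨_, ⟨x, hxz, rfl⟩, (near_right hxz (hav.mono le_rfl hvx)).symm⟩
    · rintro _ ⟨_, hp, rfl⟩
      obtain ⟨x, ⟨hax, hxu⟩, rfl⟩ := hu hp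
      have hxz : FarBelow f n x z := hvz.mono (hxu.trans huv.lt).le le_rfl
      exact ⟨x, ⟨hax, hxz.lt⟩, near_left hax hxz⟩
    · rintro _ ⟨_, hp, rfl⟩
      obtain ⟨x, ⟨hwx, hxz⟩, rfl⟩ := hw hp
      have hax : FarBelow f n a x := hav.mono le_rfl (hvw.lt.trans hwx).le
      exact ⟨x, ⟨hax.lt, hxz⟩, near_right hxz hax⟩

end FarBelow

end FarBelow

section LexSum

variable {C : Type u} {J : Type v} {A : J → Type w}

/-- The coloring of a lexicographic sum that restricts to the given coloring on each summand. -/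
def sumColoring (f : ∀ j, A j → C) (p : Σₗ j, A j) : C := f (ofLex p).1 (ofLex p).2

/-- The part of a lexicographic sum lying over a set of indices. -/
def sumOver (A : J → Type w) (S : Set J) : Set (Σₗ j, A j) := {p | (ofLex p).1 ∈ S}

variable {f : ∀ j, A j → C} {n : ℕ} {S : Set J} {j k : J} {a x : A j} {y : A k}

/-- The canonical embedding of a summand into a lexicographic sum. -/
def lexIncl (j : J) (a : A j) : Σₗ j, A j := toLex ⟨j, a⟩

theorem exists_lexIncl_eq (p : Σₗ j, A j) : ∃ j a, lexIncl j a = p := ⟨p.1, p.2, rfl⟩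

variable [LinearOrder J] [∀ j, LinearOrder (A j)]

theorem strictMono_lexIncl (j : J) : StrictMono (lexIncl (A := A) j) :=
  fun _ _ h => Sigma.Lex.lt_def.2 (.inr ⟨rfl, h⟩)

theorem lexIncl_lt_lexIncl (h : j < k) : lexIncl j a < lexIncl k y := Sigma.Lex.lt_def.2 (.inl h)

theorem index_le_of_lexIncl_le (h : lexIncl j a ≤ lexIncl k y) : j ≤ k :=
  not_lt.1 fun hkj => not_lt_of_ge h (lexIncl_lt_lexIncl hkj)

theorem index_le_of_lexIncl_lt (h : lexIncl j a < lexIncl k y) : j ≤ k :=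
  index_le_of_lexIncl_le h.le

theorem ordConnected_range_lexIncl (j : J) : (range (lexIncl (A := A) j)).OrdConnected := by
  refine ⟨?_⟩
  rintro _ ⟨a, rfl⟩ _ ⟨x, rfl⟩ p ⟨hap, hpx⟩
  obtain ⟨k, b, rfl⟩ := exists_lexIncl_eq p
  obtain rfl := (index_le_of_lexIncl_le hap).antisymm (index_le_of_lexIncl_le hpx)
  exact mem_range_self b

theorem image_lexIncl_Icc (a x : A j) :
    lexIncl j '' Icc a x = Icc (lexIncl j a) (lexIncl j x) :=
  OrderEmbedding.image_Icc (.ofStrictMono _ (strictMono_lexIncl j))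
    (ordConnected_range_lexIncl j) a x

theorem image_lexIncl_Ioo (a x : A j) :
    lexIncl j '' Ioo a x = Ioo (lexIncl j a) (lexIncl j x) :=
  OrderEmbedding.image_Ioo (.ofStrictMono _ (strictMono_lexIncl j))
    (ordConnected_range_lexIncl j) a x

theorem Ioo_lexIncl_inter_sumOver (hj : j ∈ S) (a x : A j) :
    Ioo (lexIncl j a) (lexIncl j x) ∩ sumOver A S = lexIncl j '' Ioo a x := by
  rw [← image_lexIncl_Ioo, inter_eq_left]
  rintro _ ⟨b, -, rfl⟩
  exact hj

theorem Ioo_lexIncl_inter_sumOver_of_lt (hk : k ∈ S) (hjk : j < k) (a : A j) (y : A k) :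
    Ioo (lexIncl j a) (lexIncl k y) ∩ sumOver A S =
      Ioi (lexIncl j a) ∩ sumOver A (S ∩ Iio k) ∪ Iio (lexIncl k y) ∩ sumOver A {k} := by
  ext p
  obtain ⟨l, b, rfl⟩ := exists_lexIncl_eq p
  constructor
  · rintro ⟨⟨hab, hby⟩, hl⟩
    rcases (index_le_of_lexIncl_lt hby).eq_or_lt with hlk | hlk
    exacts [.inr ⟨hby, hlk⟩, .inl ⟨hab, hl, hlk⟩]
  · rintro (⟨hab, hl, hlk⟩ | ⟨hby, rfl⟩)
    exacts [⟨⟨hab, lexIncl_lt_lexIncl hlk⟩, hl⟩, ⟨⟨lexIncl_lt_lexIncl hjk, hby⟩, hk⟩]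

/-- The rank `n` types of the rays of a summand are those of the corresponding rays of any sum of
summands that include it. -/
def RaysAgree (f : ∀ j, A j → C) (n : ℕ) : Prop :=
  ∀ (S : Set J) (j : J), j ∈ S → ∀ a : A j,
    rankType (f j) n (Ioi a) = rankType (sumColoring f) n (Ioi (lexIncl j a) ∩ sumOver A S) ∧
    rankType (f j) n (Iio a) = rankType (sumColoring f) n (Iio (lexIncl j a) ∩ sumOver A S)

/-- Arbitrarily far above and below each point of `X` lie points of each rank `n` type realized
in `Y`. -/
def RealizesFar {X Y : Type*} [LinearOrder X] [LinearOrder Y] (f : X → C) (g : Y → C) : Prop :=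
  ∀ (n : ℕ) (a : X) (y : Y),
    (∃ z, FarBelow f n a z ∧ pointType f n univ z = pointType g n univ y) ∧
    ∃ z, FarBelow f n z a ∧ pointType f n univ z = pointType g n univ y

namespace RaysAgree

theorem rankType_Ioo_inter_sumOver (h : RaysAgree f n) (hj : j ∈ S) (hk : k ∈ S) (hjk : j < k)
    (a : A j) (y : A k) :
    rankType (sumColoring f) n (Ioo (lexIncl j a) (lexIncl k y) ∩ sumOver A S) =
      rankType (f j) n (Ioi a) + rankType (f k) n (Iio y) := by
  rw [Ioo_lexIncl_inter_sumOver_of_lt hk hjk, rankType_union, ← (h (S ∩ Iio k) j ⟨hj, hjk⟩ a).1,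
    ← (h {k} k rfl y).2]
  rintro p ⟨-, -, hp⟩ q ⟨-, hq⟩
  exact Sigma.Lex.lt_def.2 (.inl (lt_of_lt_of_eq hp hq.symm))

theorem pointType_Ioi_lexIncl (h : RaysAgree f n) (hj : j ∈ S) (hax : a ≤ x) :
    pointType (sumColoring f) n (Ioi (lexIncl j a) ∩ sumOver A S) (lexIncl j x) =
      pointType (f j) n (Ioi a) x := by
  rw [pointType_Ioi hax, pointType_Ioi_inter ((strictMono_lexIncl j).monotone hax),
    Ioo_lexIncl_inter_sumOver hj, rankType_image (strictMono_lexIncl j), (h S j hj x).1]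
  rfl

theorem pointType_Iio_lexIncl (h : RaysAgree f n) (hj : j ∈ S) (hxa : x ≤ a) :
    pointType (sumColoring f) n (Iio (lexIncl j a) ∩ sumOver A S) (lexIncl j x) =
      pointType (f j) n (Iio a) x := by
  rw [pointType_Iio hxa, pointType_Iio_inter ((strictMono_lexIncl j).monotone hxa),
    Ioo_lexIncl_inter_sumOver hj, rankType_image (strictMono_lexIncl j), (h S j hj x).2]
  rfl

theorem pointType_Ioi_lexIncl_of_far (h : RaysAgree f n) (hj : j ∈ S) (hk : k ∈ S) (hjk : j < k)
    {z : A j} (hz : FarBelow (f j) n a z)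
    (hzy : pointType (f j) n univ z = pointType (f k) n univ y) :
    pointType (sumColoring f) n (Ioi (lexIncl j a) ∩ sumOver A S) (lexIncl k y) =
      pointType (f j) n (Ioi a) z := by
  rw [pointType_univ, pointType_univ, Prod.mk.injEq, Prod.mk.injEq] at hzy
  obtain ⟨hcolor, hbelow, habove⟩ := hzy
  rw [pointType_Ioi hz.lt.le, pointType_Ioi_inter (lexIncl_lt_lexIncl hjk).le,
    h.rankType_Ioo_inter_sumOver hj hk hjk, ← (h S k hk y).1, hz.rankType_Ioo, hcolor, hbelow,
    habove]
  rfl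

theorem rankType_Ioi_succ (h : RaysAgree f n) (hf : ∀ j k, RealizesFar (f j) (f k)) (hj : j ∈ S)
    (a : A j) : rankType (f j) (n + 1) (Ioi a) =
      rankType (sumColoring f) (n + 1) (Ioi (lexIncl j a) ∩ sumOver A S) := by
  rw [rankType_succ, rankType_succ]
  refine Subset.antisymm ?_ ?_
  · rintro _ ⟨x, hx, rfl⟩
    exact ⟨lexIncl j x, ⟨strictMono_lexIncl j hx, hj⟩, h.pointType_Ioi_lexIncl hj hx.le⟩
  · rintro _ ⟨p, ⟨hp, hk⟩, rfl⟩
    obtain ⟨k, y, rfl⟩ := exists_lexIncl_eq p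
    rcases (index_le_of_lexIncl_lt hp).eq_or_lt with rfl | hjk
    · have hay : a < y := (strictMono_lexIncl j).lt_iff_lt.1 hp
      exact ⟨y, hay, (h.pointType_Ioi_lexIncl hj hay.le).symm⟩
    · obtain ⟨⟨z, hz, hzy⟩, -⟩ := hf j k n a y
      exact ⟨z, hz.lt, (h.pointType_Ioi_lexIncl_of_far hj hk hjk hz hzy).symm⟩

theorem pointType_Iio_lexIncl_of_far (h : RaysAgree f n) (hj : j ∈ S) (hk : k ∈ S) (hkj : k < j)
    {z : A j} (hz : FarBelow (f j) n z a)
    (hzy : pointType (f j) n univ z = pointType (f k) n univ y) :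
    pointType (sumColoring f) n (Iio (lexIncl j a) ∩ sumOver A S) (lexIncl k y) =
      pointType (f j) n (Iio a) z := by
  rw [pointType_univ, pointType_univ, Prod.mk.injEq, Prod.mk.injEq] at hzy
  obtain ⟨hcolor, hbelow, habove⟩ := hzy
  rw [pointType_Iio hz.lt.le, pointType_Iio_inter (lexIncl_lt_lexIncl hkj).le,
    h.rankType_Ioo_inter_sumOver hk hj hkj, ← (h S k hk y).2, hz.rankType_Ioo, hcolor, hbelow,
    habove]
  rfl

theorem rankType_Iio_succ (h : RaysAgree f n) (hf : ∀ j k, RealizesFar (f j) (f k)) (hj : j ∈ S)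
    (a : A j) : rankType (f j) (n + 1) (Iio a) =
      rankType (sumColoring f) (n + 1) (Iio (lexIncl j a) ∩ sumOver A S) := by
  rw [rankType_succ, rankType_succ]
  refine Subset.antisymm ?_ ?_
  · rintro _ ⟨x, hx, rfl⟩
    exact ⟨lexIncl j x, ⟨strictMono_lexIncl j hx, hj⟩, h.pointType_Iio_lexIncl hj hx.le⟩
  · rintro _ ⟨p, ⟨hp, hk⟩, rfl⟩
    obtain ⟨k, y, rfl⟩ := exists_lexIncl_eq p
    rcases (index_le_of_lexIncl_lt hp).eq_or_lt with rfl | hkj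
    · have hya : y < a := (strictMono_lexIncl k).lt_iff_lt.1 hp
      exact ⟨y, hya, (h.pointType_Iio_lexIncl hj hya.le).symm⟩
    · obtain ⟨-, z, hz, hzy⟩ := hf j k n a y
      exact ⟨z, hz.lt, (h.pointType_Iio_lexIncl_of_far hj hk hkj hz hzy).symm⟩

end RaysAgree

theorem raysAgree_of_realizesFar (hf : ∀ j k, RealizesFar (f j) (f k)) (n : ℕ) : RaysAgree f n := by
  induction n with
  | zero => exact fun _ _ _ _ => ⟨rfl, rfl⟩
  | succ n ih => exact fun _ _ hj a => ⟨ih.rankType_Ioi_succ hf hj a, ih.rankType_Iio_succ hf hj a⟩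

theorem rankType_Ioi_lexIncl (hf : ∀ j k, RealizesFar (f j) (f k)) (n : ℕ) (a : A j) :
    rankType (sumColoring f) n (Ioi (lexIncl j a)) = rankType (f j) n (Ioi a) := by
  rw [(raysAgree_of_realizesFar hf n univ j trivial a).1]
  exact congr_arg _ (inter_univ _).symm

theorem rankType_Iio_lexIncl (hf : ∀ j k, RealizesFar (f j) (f k)) (n : ℕ) (a : A j) :
    rankType (sumColoring f) n (Iio (lexIncl j a)) = rankType (f j) n (Iio a) := by
  rw [(raysAgree_of_realizesFar hf n univ j trivial a).2]
  exact congr_arg _ (inter_univ _).symm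

end LexSum

section TupleType

variable {α β C X Y : Type*}

/-- The refinement of the coloring `f` that also records which entries of the tuple `v` a point
equals. -/
def mark (f : X → C) (v : α → X) (z : X) : C × Set α := (f z, {i | v i = z})

variable [LinearOrder X] [LinearOrder Y] {f : X → C} {g : Y → C} {n : ℕ} {v : α → X} {w : α → Y}

/-- The rank `n` type of a tuple of points of a colored linear order: naming the entries by extra
colors, it becomes the rank `n` type of the whole order. -/
def tupleType (f : X → C) (n : ℕ) (v : α → X) : RankType (C × Set α) n :=
  rankType (mark f v) n univ

theorem rankType_mark_of_forall_notMem {s : Set X} (hs : ∀ i, v i ∉ s) :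
    rankType (mark f v) n s = (rankType f n s).map (·, ∅) :=
  rankType_map n fun _ hz =>
    Prod.ext rfl (eq_empty_of_forall_notMem fun i hi => hs i (hi.symm ▸ hz))

theorem tupleType_comp_eq_map (e : β → α) (v : α → X) :
    tupleType f n (v ∘ e) = (tupleType f n v).map (Prod.map id (e ⁻¹' ·)) :=
  rankType_map n fun _ _ => rfl

theorem tupleType_comp (e : β → α) (h : tupleType f n v = tupleType g n w) :
    tupleType f n (v ∘ e) = tupleType g n (w ∘ e) := by
  rw [tupleType_comp_eq_map, tupleType_comp_eq_map, h]

theorem pointType_mark_eq {s : Set X} {t : Set Y} {i : α}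
    (h : rankType (mark f v) (n + 1) s = rankType (mark g w) (n + 1) t) (hi : v i ∈ s) :
    w i ∈ t ∧ pointType (mark f v) n s (v i) = pointType (mark g w) n t (w i) := by
  obtain ⟨y, hy, hyi⟩ := exists_pointType_eq h hi
  have hiy : i ∈ (mark g w y).2 := (congr_arg (fun p => i ∈ p.1.2) hyi).mpr rfl
  obtain rfl : w i = y := hiy
  exact ⟨hy, hyi.symm⟩

theorem color_eq_of_tupleType_eq (h : tupleType f (n + 1) v = tupleType g (n + 1) w) (i : α) :
    f (v i) = g (w i) :=
  congr_arg (fun p => p.1.1) (pointType_mark_eq h (mem_univ (v i))).2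

theorem eq_iff_of_tupleType_eq (h : tupleType f (n + 1) v = tupleType g (n + 1) w) (i j : α) :
    v i = v j ↔ w i = w j :=
  iff_of_eq (congr_arg (fun p => i ∈ p.1.2) (pointType_mark_eq h (mem_univ (v j))).2)

theorem lt_of_tupleType_eq (h : tupleType f (n + 2) v = tupleType g (n + 2) w) {i j : α}
    (hij : v i < v j) : w i < w j := by
  have hray := congr_arg (fun p => p.2.2) (pointType_mark_eq h (mem_univ (v i))).2
  exact (pointType_mark_eq hray ⟨trivial, hij⟩).1.2

theorem tupleType_option_elim (x : X) : tupleType f n (Option.elim · x v) =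
    (rankType (mark f v) n (Iio x)).map (Prod.map id (some '' ·)) +
      rankType (fun z => (f z, insert none (some '' {i | v i = z}))) n {x} +
      (rankType (mark f v) n (Ioi x)).map (Prod.map id (some '' ·)) := by
  have hoff {s : Set X} (hx : x ∉ s) : rankType (mark f (Option.elim · x v)) n s =
      (rankType (mark f v) n s).map (Prod.map id (some '' ·)) := by
    refine rankType_map n fun z hz => Prod.ext rfl (ext fun o => ?_)
    have hxz : x ≠ z := fun h => hx (h ▸ hz)
    cases o <;> simp [mark, hxz]
  have hat : rankType (mark f (Option.elim · x v)) n {x} =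
      rankType (fun z => (f z, insert none (some '' {i | v i = z}))) n {x} := by
    refine rankType_singleton_congr (Prod.ext rfl (ext fun o => ?_))
    cases o <;> simp [mark]
  rw [tupleType, rankType_univ_eq_add le_rfl, Icc_self, hoff self_notMem_Iio, hat,
    hoff self_notMem_Ioi]

theorem exists_tupleType_option_elim_eq (h : tupleType f (n + 1) v = tupleType g (n + 1) w)
    (x : X) : ∃ y, tupleType f n (Option.elim · x v) = tupleType g n (Option.elim · y w) := by
  obtain ⟨y, -, hyx⟩ := exists_pointType_eq h (mem_univ x)
  rw [pointType_univ, pointType_univ] at hyx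
  obtain ⟨hcolor, hrays⟩ := Prod.mk.inj hyx
  obtain ⟨hbelow, habove⟩ := Prod.mk.inj hrays
  refine ⟨y, ?_⟩
  rw [tupleType_option_elim, tupleType_option_elim, hbelow, habove]
  congr 2
  exact rankType_singleton_congr
    (congr_arg (fun p : C × Set α => (p.1, insert none (some '' p.2))) hcolor.symm)

theorem tupleType_lexIncl {J : Type*} {A : J → Type*} [LinearOrder J] [∀ j, LinearOrder (A j)]
    [Finite α] {f : ∀ j, A j → C} (hf : ∀ j k, RealizesFar (f j) (f k)) (n : ℕ) {j : J}
    [Nonempty (A j)] (v : α → A j) :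
    tupleType (sumColoring f) n (lexIncl j ∘ v) = tupleType (f j) n v := by
  obtain ⟨b, hb⟩ := (finite_range v).bddAbove
  obtain ⟨a, ha⟩ := ((finite_range v).insert b).bddBelow
  have hab : a ≤ b := ha (mem_insert b _)
  have hle : lexIncl j a ≤ lexIncl j b := (strictMono_lexIncl j).monotone hab
  have hlo (i : α) : a ≤ v i := ha (mem_insert_of_mem b (mem_range_self i))
  have hhi (i : α) : v i ≤ b := hb (mem_range_self i)
  have hlo' (i : α) : lexIncl j a ≤ (lexIncl j ∘ v) i := (strictMono_lexIncl j).monotone (hlo i)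
  have hhi' (i : α) : (lexIncl j ∘ v) i ≤ lexIncl j b := (strictMono_lexIncl j).monotone (hhi i)
  have hmark : mark (sumColoring f) (lexIncl j ∘ v) ∘ lexIncl j = mark (f j) v :=
    funext fun x => Prod.ext rfl (ext fun i => (strictMono_lexIncl j).injective.eq_iff)
  rw [tupleType, tupleType, rankType_univ_eq_add hle, rankType_univ_eq_add hab,
    rankType_mark_of_forall_notMem fun i => notMem_Iio.2 (hlo i),
    rankType_mark_of_forall_notMem fun i => notMem_Ioi.2 (hhi i),
    rankType_mark_of_forall_notMem fun i => notMem_Iio.2 (hlo' i),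
    rankType_mark_of_forall_notMem fun i => notMem_Ioi.2 (hhi' i),
    rankType_Iio_lexIncl hf, rankType_Ioi_lexIncl hf, ← image_lexIncl_Icc,
    rankType_image (strictMono_lexIncl j), hmark]

end TupleType

section Formulas

variable {ι : Type}

/-- The colors of `x` among the finitely many in `F`. -/
def colorsIn {X : Type} (F : Finset ι) (c : ι → Set X) (x : X) : Set F := {i | x ∈ c i}

theorem exists_eq_var {α : Type} (t : (CLOLang ι).Term α) : ∃ i, t = Term.var i := by
  cases t with
  | var i => exact ⟨i, rfl⟩
  | func f _ => exact f.elim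

/-- The formula `φ` cannot tell apart tuples with the same rank `n` type with respect to the
finitely many colors in `F`. -/
def DeterminedBy {α : Type} {m : ℕ} (φ : (CLOLang ι).BoundedFormula α m) (F : Finset ι) (n : ℕ) :
    Prop :=
  ∀ ⦃X Y : Type⦄ [LinearOrder X] [LinearOrder Y] ⦃c : ι → Set X⦄ ⦃d : ι → Set Y⦄
    ⦃v : α → X⦄ ⦃w : α → Y⦄ ⦃xs : Fin m → X⦄ ⦃ys : Fin m → Y⦄,
    tupleType (colorsIn F c) n (Sum.elim v xs) = tupleType (colorsIn F d) n (Sum.elim w ys) →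
    (let := CLOStr ι X c; φ.Realize v xs) → (let := CLOStr ι Y d; φ.Realize w ys)

theorem sumElim_snoc_eq_comp {α X : Type} {m : ℕ} (v : α → X) (xs : Fin m → X) (x : X) :
    Sum.elim v (Fin.snoc xs x : Fin (m + 1) → X) = (Option.elim · x (Sum.elim v xs)) ∘
      Sum.elim (some ∘ Sum.inl)
        (Fin.snoc (some ∘ Sum.inr) none : Fin (m + 1) → Option (α ⊕ Fin m)) := by
  ext (i | i)
  · rfl
  · induction i using Fin.lastCases <;> simp

namespace DeterminedBy

variable {α : Type} {m : ℕ} {F : Finset ι} {n : ℕ}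

theorem falsum : DeterminedBy (⊥ : (CLOLang ι).BoundedFormula α m) F n :=
  fun _ _ _ _ _ _ _ _ _ _ _ h => h

theorem equal (t₁ t₂ : (CLOLang ι).Term (α ⊕ Fin m)) :
    DeterminedBy (.equal t₁ t₂) F (n + 1) := by
  obtain ⟨i, rfl⟩ := exists_eq_var t₁
  obtain ⟨j, rfl⟩ := exists_eq_var t₂
  exact fun _ _ _ _ _ _ _ _ _ _ h => (eq_iff_of_tupleType_eq h i j).1

theorem lt (ts : Fin 2 → (CLOLang ι).Term (α ⊕ Fin m)) :
    DeterminedBy (.rel CLORel.lt ts) F (n + 2) := by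
  choose t ht using fun i => exists_eq_var (ts i)
  obtain rfl : ts = fun i => Term.var (t i) := funext ht
  exact fun _ _ _ _ _ _ _ _ _ _ h => lt_of_tupleType_eq h

theorem color {i : ι} (hi : i ∈ F) (ts : Fin 1 → (CLOLang ι).Term (α ⊕ Fin m)) :
    DeterminedBy (.rel (CLORel.color i) ts) F (n + 1) := by
  choose t ht using fun i => exists_eq_var (ts i)
  obtain rfl : ts = fun i => Term.var (t i) := funext ht
  exact fun _ _ _ _ _ _ _ _ _ _ h => (Set.ext_iff.1 (color_eq_of_tupleType_eq h (t 0)) ⟨i, hi⟩).1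

theorem imp {φ ψ : (CLOLang ι).BoundedFormula α m} (hφ : DeterminedBy φ F n)
    (hψ : DeterminedBy ψ F n) : DeterminedBy (φ.imp ψ) F n :=
  fun _ _ _ _ _ _ _ _ _ _ h hX hY => hψ h (hX (hφ h.symm hY))

theorem all {φ : (CLOLang ι).BoundedFormula α (m + 1)} (hφ : DeterminedBy φ F n) :
    DeterminedBy φ.all F (n + 1) := by
  intro X Y _ _ c d v w xs ys h hX _ y
  obtain ⟨x, hx⟩ := exists_tupleType_option_elim_eq h.symm y
  refine hφ ?_ (hX x)
  rw [sumElim_snoc_eq_comp v, sumElim_snoc_eq_comp w]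
  exact tupleType_comp _ hx.symm

theorem sat_iff {φ : (CLOLang ι).Formula α} (hφ : DeterminedBy φ F n) {X Y : Type} [LinearOrder X]
    [LinearOrder Y] {c : ι → Set X} {d : ι → Set Y} {v : α → X} {w : α → Y}
    (h : tupleType (colorsIn F c) n v = tupleType (colorsIn F d) n w) :
    Sat X c φ v ↔ Sat Y d φ w := by
  have hempty {Z : Type} (u : α → Z) :
      Sum.elim u (default : Fin 0 → Z) = u ∘ Sum.elim id finZeroElim := by
    ext (i | i); exacts [rfl, i.elim0]
  have h' : tupleType (colorsIn F c) n (Sum.elim v (default : Fin 0 → X)) =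
      tupleType (colorsIn F d) n (Sum.elim w (default : Fin 0 → Y)) := by
    rw [hempty, hempty]
    exact tupleType_comp _ h
  exact ⟨hφ h', hφ h'.symm⟩

end DeterminedBy

theorem eventually_determinedBy {α : Type} {m : ℕ} (φ : (CLOLang ι).BoundedFormula α m) :
    ∀ᶠ p : Finset ι × ℕ in Filter.atTop, DeterminedBy φ p.1 p.2 := by
  classical
  induction φ with
  | falsum => exact .of_forall fun _ => .falsum
  | equal t₁ t₂ =>
    filter_upwards [Filter.eventually_ge_atTop (∅, 1)] with ⟨F, n⟩ ⟨_, hn⟩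
    obtain ⟨k, rfl⟩ := Nat.exists_eq_add_of_le' hn
    exact .equal t₁ t₂
  | rel R ts =>
    cases R with
    | lt =>
      filter_upwards [Filter.eventually_ge_atTop (∅, 2)] with ⟨F, n⟩ ⟨_, hn⟩
      obtain ⟨k, rfl⟩ := Nat.exists_eq_add_of_le' hn
      exact .lt ts
    | color i =>
      filter_upwards [Filter.eventually_ge_atTop ({i}, 1)] with ⟨F, n⟩ ⟨hi, hn⟩
      obtain ⟨k, rfl⟩ := Nat.exists_eq_add_of_le' hn
      exact .color (hi (Finset.mem_singleton_self i)) ts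
  | imp φ ψ hφ hψ => filter_upwards [hφ, hψ] with _ using .imp
  | all φ ih =>
    obtain ⟨⟨F₀, n₀⟩, h₀⟩ := Filter.eventually_atTop.1 ih
    filter_upwards [Filter.eventually_ge_atTop (F₀, n₀ + 1)] with ⟨F, n⟩ ⟨hF, hn⟩
    obtain ⟨k, rfl⟩ := Nat.exists_eq_add_of_le' hn
    exact .all (h₀ (F, k + n₀) ⟨hF, Nat.le_add_left n₀ k⟩)

theorem sat_iff_of_tupleType_eq {α X Y : Type} [LinearOrder X] [LinearOrder Y] {c : ι → Set X}
    {d : ι → Set Y} {v : α → X} {w : α → Y} (h : ∀ (F : Finset ι) (n : ℕ),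
      tupleType (colorsIn F c) n v = tupleType (colorsIn F d) n w)
    (φ : (CLOLang ι).Formula α) : Sat X c φ v ↔ Sat Y d φ w := by
  classical
  obtain ⟨⟨F, n⟩, hφ⟩ := (eventually_determinedBy φ).exists
  exact hφ.sat_iff (h F n)

end Formulas

section Expressible

/-- A property of tuples in colored linear orders that is defined by a single formula. -/
def Expressible {ι α : Type}
    (R : ∀ (X : Type) [LinearOrder X], (ι → Set X) → (α → X) → Prop) : Prop :=
  ∃ φ : (CLOLang ι).Formula α, ∀ (X : Type) [LinearOrder X] (c : ι → Set X) (v : α → X),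
    Sat X c φ v ↔ R X c v

namespace Expressible

variable {ι α : Type}

theorem sat (φ : (CLOLang ι).Formula α) : Expressible fun X [LinearOrder X] c v => Sat X c φ v :=
  ⟨φ, fun _ _ _ _ => Iff.rfl⟩

theorem lt (i j : α) : Expressible (ι := ι) fun _ [LinearOrder _] _ v => v i < v j := by
  refine ⟨Relations.formula₂ (L := CLOLang ι) CLORel.lt (Term.var i) (Term.var j), ?_⟩
  intro X _ c v
  let := CLOStr ι X c
  exact Formula.realize_rel₂

theorem color (k : ι) (i : α) : Expressible (ι := ι) fun _ [LinearOrder _] c v => v i ∈ c k := by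
  refine ⟨Relations.formula₁ (L := CLOLang ι) (CLORel.color k) (Term.var i), ?_⟩
  intro X _ c v
  let := CLOStr ι X c
  exact Formula.realize_rel₁

theorem const (p : Prop) : Expressible (ι := ι) (α := α) fun _ [LinearOrder _] _ _ => p := by
  by_cases hp : p
  · exact ⟨⊤, fun X _ c v => by simp only [hp, iff_true]; exact fun h => h⟩
  · exact ⟨⊥, fun X _ c v => by simp only [hp, iff_false]; exact fun h => h⟩

variable {R S : ∀ (X : Type) [LinearOrder X], (ι → Set X) → (α → X) → Prop}

theorem congr (h : Expressible R)
    (e : ∀ (X : Type) [LinearOrder X] (c : ι → Set X) (v : α → X), R X c v ↔ S X c v) :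
    Expressible S :=
  h.imp fun _ hφ X _ c v => (hφ X c v).trans (e X c v)

theorem imp (hR : Expressible R) (hS : Expressible S) :
    Expressible fun X [LinearOrder X] c v => R X c v → S X c v := by
  obtain ⟨φ, hφ⟩ := hR
  obtain ⟨ψ, hψ⟩ := hS
  exact ⟨φ.imp ψ, fun X _ c v => imp_congr (hφ X c v) (hψ X c v)⟩

theorem not (hR : Expressible R) : Expressible fun X [LinearOrder X] c v => ¬ R X c v :=
  hR.imp (const False)

theorem and (hR : Expressible R) (hS : Expressible S) :
    Expressible fun X [LinearOrder X] c v => R X c v ∧ S X c v :=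
  (hR.imp hS.not).not.congr fun X _ c v => by tauto

theorem iff (hR : Expressible R) (hS : Expressible S) :
    Expressible fun X [LinearOrder X] c v => (R X c v ↔ S X c v) :=
  ((hR.imp hS).and (hS.imp hR)).congr fun X _ c v => by tauto

theorem forall_finite {β : Type} [Finite β]
    {R : β → ∀ (X : Type) [LinearOrder X], (ι → Set X) → (α → X) → Prop}
    (hR : ∀ b, Expressible (R b)) : Expressible fun X [LinearOrder X] c v => ∀ b, R b X c v := by
  choose φ hφ using hR
  refine ⟨Formula.iInf φ, fun X _ c v => ?_⟩
  simp only [← hφ]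
  let := CLOStr ι X c
  exact Formula.realize_iInf

theorem ex {Q : ∀ (X : Type) [LinearOrder X], (ι → Set X) → (α → X) → X → Prop}
    (hQ : Expressible (α := α ⊕ Unit) fun X [LinearOrder X] c v =>
      Q X c (fun i => v (.inl i)) (v (.inr ()))) :
    Expressible fun X [LinearOrder X] c v => ∃ x, Q X c v x := by
  obtain ⟨φ, hφ⟩ := hQ
  refine ⟨Formula.iExs Unit φ, fun X _ c v => ?_⟩
  let := CLOStr ι X c
  refine (Formula.realize_iExs (φ := φ) (v := v)).trans ⟨?_, ?_⟩
  · rintro ⟨x, hx⟩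
    exact ⟨x (), (hφ X c _).1 hx⟩
  · rintro ⟨x, hx⟩
    exact ⟨fun _ => x, (hφ X c (Sum.elim v fun _ => x)).2 hx⟩

theorem all {Q : ∀ (X : Type) [LinearOrder X], (ι → Set X) → (α → X) → X → Prop}
    (hQ : Expressible (α := α ⊕ Unit) fun X [LinearOrder X] c v =>
      Q X c (fun i => v (.inl i)) (v (.inr ()))) :
    Expressible fun X [LinearOrder X] c v => ∀ x, Q X c v x :=
  (ex (Q := fun X _ c v x => ¬ Q X c v x) hQ.not).not.congr fun _ _ _ _ => not_exists_not

theorem relabel {β : Type} (hR : Expressible R) (r : α → β) :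
    Expressible fun X [LinearOrder X] c (v : β → X) => R X c fun i => v (r i) := by
  obtain ⟨φ, hφ⟩ := hR
  refine ⟨φ.relabel r, fun X _ c v => ?_⟩
  let := CLOStr ι X c
  exact Formula.realize_relabel.trans (hφ X c _)

theorem eq_of_finite {T : Type} [Finite T]
    {p q : ∀ (X : Type) [LinearOrder X], (ι → Set X) → (α → X) → T}
    (hp : ∀ τ, Expressible fun X [LinearOrder X] c v => p X c v = τ)
    (hq : ∀ τ, Expressible fun X [LinearOrder X] c v => q X c v = τ) :
    Expressible fun X [LinearOrder X] c v => p X c v = q X c v :=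
  (forall_finite fun τ => (hp τ).imp (hq τ)).congr fun _ _ _ _ =>
    ⟨fun h => (h _ rfl).symm, fun h _ hτ => h ▸ hτ⟩

theorem colorsIn_eq (F : Finset ι) (γ : Set F) (i : α) :
    Expressible fun _ [LinearOrder _] c v => colorsIn F c (v i) = γ :=
  (forall_finite fun k : F => (color k.1 i).iff (const (k ∈ γ))).congr
    fun _ _ _ _ => Set.ext_iff.symm

end Expressible

/-- A set depending on a tuple of parameters in colored linear orders that is defined by a single
formula. -/
def ExpressibleSet {ι α : Type}
    (s : ∀ (X : Type) [LinearOrder X], (ι → Set X) → (α → X) → Set X) : Prop :=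
  Expressible (α := α ⊕ Unit) fun X [LinearOrder X] c v =>
    v (.inr ()) ∈ s X c fun i => v (.inl i)

namespace ExpressibleSet

variable {ι α : Type} {s t : ∀ (X : Type) [LinearOrder X], (ι → Set X) → (α → X) → Set X}

theorem univ : ExpressibleSet (ι := ι) (α := α) fun _ [LinearOrder _] _ _ => Set.univ :=
  .const True

theorem fmlSet (φ : (CLOLang ι).Formula Unit) :
    ExpressibleSet (α := α) fun X [LinearOrder X] c _ => FmlSet ι X c φ :=
  (Expressible.sat φ).relabel fun _ => Sum.inr ()

theorem Ioi (i : α) : ExpressibleSet (ι := ι) fun _ [LinearOrder _] _ v => Set.Ioi (v i) :=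
  .lt (Sum.inl i) (Sum.inr ())

theorem Iio (i : α) : ExpressibleSet (ι := ι) fun _ [LinearOrder _] _ v => Set.Iio (v i) :=
  .lt (Sum.inr ()) (Sum.inl i)

theorem inter (hs : ExpressibleSet s) (ht : ExpressibleSet t) :
    ExpressibleSet fun X [LinearOrder X] c v => s X c v ∩ t X c v :=
  Expressible.and hs ht

theorem Ioo (i j : α) : ExpressibleSet (ι := ι) fun _ [LinearOrder _] _ v => Set.Ioo (v i) (v j) :=
  (Ioi i).inter (Iio j)

theorem relabel {β : Type} (hs : ExpressibleSet s) (r : α → β) :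
    ExpressibleSet fun X [LinearOrder X] c (v : β → X) => s X c fun i => v (r i) :=
  Expressible.relabel hs (Sum.map r id)

theorem ordConnected (hs : ExpressibleSet s) :
    Expressible fun X [LinearOrder X] c v => (s X c v).OrdConnected := by
  refine Expressible.congr (R := fun X [LinearOrder X] c v => ∀ x, x ∈ s X c v → ∀ y, y ∈ s X c v →
      ∀ z, ¬ z < x → ¬ y < z → z ∈ s X c v)
    (.all <| .imp hs <| .all <| .imp (hs.relabel Sum.inl) <| .all <|
      .imp (.not (.lt (Sum.inr ()) (Sum.inl (Sum.inl (Sum.inr ()))))) <|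
      .imp (.not (.lt (Sum.inl (Sum.inr ())) (Sum.inr ()))) <|
      (hs.relabel Sum.inl).relabel Sum.inl) fun X _ c v => ?_
  simp only [ordConnected_def, subset_def, mem_Icc, not_lt, and_imp]

theorem pointType_eq_of_rankType_eq {F : Finset ι} {n : ℕ}
    (h : ∀ {s : ∀ (X : Type) [LinearOrder X], (ι → Set X) → (α → X) → Set X}, ExpressibleSet s →
      ∀ τ, Expressible fun X [LinearOrder X] c v => rankType (colorsIn F c) n (s X c v) = τ)
    (hs : ExpressibleSet s) (i : α) (p : PointType (Set F) n) :
    Expressible fun X [LinearOrder X] c v => pointType (colorsIn F c) n (s X c v) (v i) = p :=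
  ((Expressible.colorsIn_eq F p.1 i).and
    ((h (hs.inter (Iio i)) p.2.1).and (h (hs.inter (Ioi i)) p.2.2))).congr fun _ _ _ _ => by
      simp only [pointType, Prod.ext_iff]

theorem rankType_eq (hs : ExpressibleSet s) (F : Finset ι) (n : ℕ) (τ : RankType (Set F) n) :
    Expressible fun X [LinearOrder X] c v => rankType (colorsIn F c) n (s X c v) = τ := by
  induction n generalizing α with
  | zero => exact (Expressible.const True).congr fun _ _ _ _ => iff_of_true trivial rfl
  | succ n ih =>
    change Set (PointType (Set F) n) at τ
    refine Expressible.congr (R := fun X [LinearOrder X] c v => ∀ p : PointType (Set F) n,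
      (∃ x, x ∈ s X c v ∧ pointType (colorsIn F c) n (s X c v) x = p) ↔
        p ∈ τ)
      (.forall_finite fun p => .iff (.ex <| .and hs ?_) (.const _))
      fun _ _ _ _ => Set.ext_iff.symm
    exact pointType_eq_of_rankType_eq ih (hs.relabel Sum.inl) (Sum.inr ()) p

theorem pointType_eq (hs : ExpressibleSet s) (F : Finset ι) (n : ℕ) (i : α)
    (p : PointType (Set F) n) :
    Expressible fun X [LinearOrder X] c v => pointType (colorsIn F c) n (s X c v) (v i) = p :=
  pointType_eq_of_rankType_eq (fun hs => hs.rankType_eq F n) hs i p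

theorem represents (ht : ExpressibleSet t) (hs : ExpressibleSet s) (F : Finset ι) (n : ℕ) :
    Expressible fun X [LinearOrder X] c v =>
      Represents (colorsIn F c) n (t X c v) (s X c v) := by
  refine Expressible.congr (R := fun X [LinearOrder X] c v => ∀ x, x ∈ s X c v →
    ∃ y, y ∈ t X c v ∧ pointType (colorsIn F c) n (s X c v) y =
      pointType (colorsIn F c) n (s X c v) x)
    (.all <| .imp hs <| .ex <| .and (ht.relabel Sum.inl) ?_)
    fun _ _ _ _ => by rw [Represents, image_subset_iff]; rfl
  have hs' := (hs.relabel Sum.inl).relabel (Sum.inl (α := α ⊕ Unit) (β := Unit))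
  exact .eq_of_finite (fun p => hs'.pointType_eq F n (Sum.inr ()) p)
    fun p => hs'.pointType_eq F n (Sum.inl (Sum.inr ())) p

end ExpressibleSet

end Expressible

section SelfAdditive

variable {ι X Y : Type} [LinearOrder X] [LinearOrder Y] {c : ι → Set X} {d : ι → Set Y}

theorem cloEquiv_iff : CLOEquiv ι X c Y d ↔
    ∀ φ : (CLOLang ι).Sentence, Sat X c φ Empty.elim ↔ Sat Y d φ Empty.elim := by
  let := CLOStr ι X c
  let := CLOStr ι Y d
  refine elementarilyEquivalent_iff.trans (forall_congr' fun φ => ?_)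
  rw [Subsingleton.elim (Empty.elim : Empty → X) default,
    Subsingleton.elim (Empty.elim : Empty → Y) default]
  exact Iff.rfl

namespace CLOEquiv

theorem refl (c : ι → Set X) : CLOEquiv ι X c X c := cloEquiv_iff.2 fun _ => Iff.rfl

theorem symm (h : CLOEquiv ι X c Y d) : CLOEquiv ι Y d X c :=
  cloEquiv_iff.2 fun φ => (cloEquiv_iff.1 h φ).symm

theorem trans {Z : Type} [LinearOrder Z] {e : ι → Set Z} (h : CLOEquiv ι X c Y d)
    (h' : CLOEquiv ι Y d Z e) : CLOEquiv ι X c Z e :=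
  cloEquiv_iff.2 fun φ => (cloEquiv_iff.1 h φ).trans (cloEquiv_iff.1 h' φ)

theorem iff_of_expressible (h : CLOEquiv ι X c Y d)
    {R : ∀ (X : Type) [LinearOrder X], (ι → Set X) → Prop}
    (hR : Expressible (α := Empty) fun X [LinearOrder X] c _ => R X c) : R X c ↔ R Y d := by
  obtain ⟨φ, hφ⟩ := hR
  exact (hφ X c _).symm.trans ((cloEquiv_iff.1 h φ).trans (hφ Y d _))

end CLOEquiv

theorem IsElemMap.mem_fmlSet_iff {e : X → Y} (he : IsElemMap ι c d e)
    (φ : (CLOLang ι).Formula Unit) (x : X) : x ∈ FmlSet ι X c φ ↔ e x ∈ FmlSet ι Y d φ := by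
  obtain ⟨ψ, hψ⟩ := (Expressible.sat φ).relabel fun _ => (0 : Fin 1)
  exact (hψ X c fun _ => x).symm.trans ((he 1 ψ fun _ => x).trans (hψ Y d fun _ => e x))

theorem selfAdditive_iff : SelfAdditive ι X c ↔ Nontrivial X ∧
    ∀ φ : (CLOLang ι).Formula Unit, (FmlSet ι X c φ).OrdConnected →
      ∀ x, x ∈ FmlSet ι X c φ → ∀ y, y ∈ FmlSet ι X c φ := by
  refine and_congr_right fun _ => forall_congr' fun φ => imp_congr_right fun _ => ?_
  rw [or_iff_not_imp_left, eq_univ_iff_forall, ← Ne, ← nonempty_iff_ne_empty, Set.Nonempty,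
    forall_exists_index]

namespace SelfAdditive

variable {R : ∀ (X : Type) [LinearOrder X], (ι → Set X) → X → Prop} {x : X}

theorem of_cloEquiv (hX : SelfAdditive ι X c) (h : CLOEquiv ι X c Y d) : SelfAdditive ι Y d := by
  rw [selfAdditive_iff] at hX ⊢
  obtain ⟨_, hX⟩ := hX
  refine ⟨?_, fun φ => ?_⟩
  · obtain ⟨x, y, hxy⟩ := (h.iff_of_expressible (R := fun X _ _ => ∃ x y : X, x < y)
      (.ex <| .ex <| .lt (Sum.inl (Sum.inr ())) (Sum.inr ()))).1 (exists_pair_lt X)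
    exact nontrivial_of_lt x y hxy
  · have hφ := ExpressibleSet.fmlSet (α := Empty) φ
    exact (h.iff_of_expressible (R := fun X _ c => (FmlSet ι X c φ).OrdConnected →
      ∀ x, x ∈ FmlSet ι X c φ → ∀ y, y ∈ FmlSet ι X c φ)
      (.imp hφ.ordConnected <| .all <| .imp hφ <| .all <| hφ.relabel Sum.inl)).1 (hX φ)

theorem forall_of_exists (h : SelfAdditive ι X c)
    (hR : Expressible (α := Unit) fun X [LinearOrder X] c v => R X c (v ()))
    (hconv : {x | R X c x}.OrdConnected) (hx : R X c x) (y : X) : R X c y := by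
  obtain ⟨φ, hφ⟩ := hR
  have hset : FmlSet ι X c φ = {x | R X c x} := Set.ext fun x => hφ X c _
  have hφ' := (selfAdditive_iff.1 h).2 φ
  rw [hset] at hφ'
  exact hφ' hconv x hx y

theorem noMaxOrder (h : SelfAdditive ι X c) : NoMaxOrder X := by
  have := h.1
  obtain ⟨a, b, hab⟩ := exists_pair_lt X
  exact ⟨h.forall_of_exists (R := fun _ _ _ a => ∃ b, a < b) (.ex <| .lt (Sum.inl ()) (Sum.inr ()))
    (IsLowerSet.ordConnected fun _ _ hle ⟨z, hz⟩ => ⟨z, hle.trans_lt hz⟩) ⟨b, hab⟩⟩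

theorem noMinOrder (h : SelfAdditive ι X c) : NoMinOrder X := by
  have := h.1
  obtain ⟨a, b, hab⟩ := exists_pair_lt X
  exact ⟨h.forall_of_exists (R := fun _ _ _ b => ∃ a, a < b) (.ex <| .lt (Sum.inr ()) (Sum.inl ()))
    (IsUpperSet.ordConnected fun _ _ hle ⟨z, hz⟩ => ⟨z, hz.trans_le hle⟩) ⟨a, hab⟩⟩

theorem exists_represents_Ioo_Iio (h : SelfAdditive ι X c) (F : Finset ι) (n : ℕ)
    (hR : Expressible (α := Unit) fun X [LinearOrder X] c v => R X c (v ())) (hx : R X c x)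
    (w : X) : ∃ z, w < z ∧ Represents (colorsIn F c) n (Ioo w z) (Iio z) ∧ R X c z := by
  have := h.noMinOrder
  obtain ⟨w₀, hw₀, hrep⟩ := exists_lt_represents_Ioo (colorsIn F c) n x
  refine h.forall_of_exists (x := w₀)
    (R := fun X _ c w => ∃ z, w < z ∧ Represents (colorsIn F c) n (Ioo w z) (Iio z) ∧ R X c z)
    (.ex <| .and (.lt (Sum.inl ()) (Sum.inr ())) <| .and
      (ExpressibleSet.represents (.Ioo (Sum.inl ()) (Sum.inr ())) (.Iio (Sum.inr ())) F n) <|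
      hR.relabel fun _ => Sum.inr ())
    (IsLowerSet.ordConnected ?_) ⟨x, hw₀, hrep, hx⟩ w
  rintro _ _ hle ⟨z, hz, hrep, hR⟩
  exact ⟨z, hle.trans_lt hz, hrep.mono (Ioo_subset_Ioo_left hle), hR⟩

theorem exists_represents_Ioo_Ioi (h : SelfAdditive ι X c) (F : Finset ι) (n : ℕ)
    (hR : Expressible (α := Unit) fun X [LinearOrder X] c v => R X c (v ())) (hx : R X c x)
    (u : X) : ∃ a, a < u ∧ Represents (colorsIn F c) n (Ioo a u) (Ioi a) ∧ R X c a := by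
  have := h.noMaxOrder
  obtain ⟨u₀, hu₀, hrep⟩ := exists_gt_represents_Ioo (colorsIn F c) n x
  refine h.forall_of_exists (x := u₀)
    (R := fun X _ c u => ∃ a, a < u ∧ Represents (colorsIn F c) n (Ioo a u) (Ioi a) ∧ R X c a)
    (.ex <| .and (.lt (Sum.inr ()) (Sum.inl ())) <| .and
      (ExpressibleSet.represents (.Ioo (Sum.inr ()) (Sum.inl ())) (.Ioi (Sum.inr ())) F n) <|
      hR.relabel fun _ => Sum.inr ())
    (IsUpperSet.ordConnected ?_) ⟨x, hu₀, hrep, hx⟩ u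
  rintro _ _ hle ⟨a, ha, hrep, hR⟩
  exact ⟨a, ha.trans_le hle, hrep.mono (Ioo_subset_Ioo_right hle), hR⟩

theorem exists_farBelow_right (h : SelfAdditive ι X c) (F : Finset ι) (n : ℕ)
    (hR : Expressible (α := Unit) fun X [LinearOrder X] c v => R X c (v ())) (hx : R X c x)
    (a : X) : ∃ z, FarBelow (colorsIn F c) n a z ∧ R X c z := by
  have := h.noMaxOrder
  induction n generalizing R a with
  | zero =>
    obtain ⟨z, haz, -, hz⟩ := h.exists_represents_Ioo_Iio F 0 hR hx a
    exact ⟨z, haz, hz⟩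
  | succ n ih =>
    have ih' := ih (R := fun _ _ _ _ => True) (.const True) trivial
    obtain ⟨u, hu⟩ := exists_gt_represents_Ioo (colorsIn F c) n a
    obtain ⟨v, huv, -⟩ := ih' u
    obtain ⟨w, hvw, -⟩ := ih' v
    obtain ⟨z, hwz, hw, hz⟩ := h.exists_represents_Ioo_Iio F n hR hx w
    exact ⟨z, ⟨u, v, w, hu, ⟨huv, hvw⟩, hwz, hw⟩, hz⟩

theorem exists_farBelow_left (h : SelfAdditive ι X c) (F : Finset ι) (n : ℕ)
    (hR : Expressible (α := Unit) fun X [LinearOrder X] c v => R X c (v ())) (hx : R X c x)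
    (z : X) : ∃ a, FarBelow (colorsIn F c) n a z ∧ R X c a := by
  have := h.noMinOrder
  induction n generalizing R z with
  | zero =>
    obtain ⟨a, haz, -, ha⟩ := h.exists_represents_Ioo_Ioi F 0 hR hx z
    exact ⟨a, haz, ha⟩
  | succ n ih =>
    have ih' := ih (R := fun _ _ _ _ => True) (.const True) trivial
    obtain ⟨w, hw⟩ := exists_lt_represents_Ioo (colorsIn F c) n z
    obtain ⟨v, hvw, -⟩ := ih' w
    obtain ⟨u, huv, -⟩ := ih' v
    obtain ⟨a, hau, hu, ha⟩ := h.exists_represents_Ioo_Ioi F n hR hx u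
    exact ⟨a, ⟨u, v, w, ⟨hau, hu⟩, ⟨huv, hvw⟩, hw⟩, ha⟩

theorem realizesFar (hX : SelfAdditive ι X c) (h : CLOEquiv ι X c Y d) (F : Finset ι) :
    RealizesFar (colorsIn F c) (colorsIn F d) := by
  intro n a y
  let R (Z : Type) [LinearOrder Z] (e : ι → Set Z) (z : Z) : Prop :=
    pointType (colorsIn F e) n univ z = pointType (colorsIn F d) n univ y
  have hR {α : Type} (i : α) : Expressible fun Z [LinearOrder Z] e v => R Z e (v i) :=
    ExpressibleSet.univ.pointType_eq F n i _
  obtain ⟨x, hx⟩ : ∃ x, R X c x :=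
    (h.iff_of_expressible (R := fun Z _ e => ∃ z, R Z e z) (.ex (hR _))).2 ⟨y, rfl⟩
  exact ⟨hX.exists_farBelow_right F n (hR ()) hx a, hX.exists_farBelow_left F n (hR ()) hx a⟩

end SelfAdditive

section Sum

variable {J : Type} [LinearOrder J] {A : J → Type} [∀ j, LinearOrder (A j)]
  {cA : ∀ j, ι → Set (A j)}

theorem sat_lexIncl_iff (hA : ∀ j, SelfAdditive ι (A j) (cA j))
    (hE : ∀ j k, CLOEquiv ι (A j) (cA j) (A k) (cA k)) {α : Type} [Finite α]
    (φ : (CLOLang ι).Formula α) {j : J} (v : α → A j) :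
    Sat (Σₗ j, A j) (sigmaColor cA) φ (lexIncl j ∘ v) ↔ Sat (A j) (cA j) φ v := by
  have := (hA j).1
  refine sat_iff_of_tupleType_eq (fun F n => ?_) φ
  exact tupleType_lexIncl (fun j k => (hA j).realizesFar (hE j k) F) n v

theorem selfAdditive_of_isElemMap [Nontrivial J] [Nontrivial X]
    (h : ∀ j : J, IsElemMap ι c (sigmaColor fun _ : J => c) (lexIncl (A := fun _ => X) j))
    (hE : CLOEquiv ι (Σₗ _ : J, X) (sigmaColor fun _ => c) X c) : SelfAdditive ι X c := by
  refine selfAdditive_iff.2 ⟨‹_›, fun φ hφ a ha b => ?_⟩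
  have hconv := (hE.iff_of_expressible (ExpressibleSet.fmlSet φ).ordConnected).2 hφ
  obtain ⟨i, k, hik⟩ := exists_pair_lt J
  have hends := hconv.out (((h i).mem_fmlSet_iff φ a).1 ha) (((h k).mem_fmlSet_iff φ a).1 ha)
  rcases le_total a b with hab | hba
  · exact ((h i).mem_fmlSet_iff φ b).2
      (hends ⟨(strictMono_lexIncl i).monotone hab, (lexIncl_lt_lexIncl hik).le⟩)
  · exact ((h k).mem_fmlSet_iff φ b).2
      (hends ⟨(lexIncl_lt_lexIncl hik).le, (strictMono_lexIncl k).monotone hba⟩)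

end Sum

end SelfAdditive

theorem stmt6_general {ι M : Type} [LinearOrder M] (c : ι → Set M) (hM : Nontrivial M) :
    (∀ φ : (CLOLang ι).Formula Unit, (FmlSet ι M c φ).OrdConnected →
        FmlSet ι M c φ = ∅ ∨ FmlSet ι M c φ = Set.univ) ↔
      (∀ (J : Type) [LinearOrder J] [Nonempty J], ∀ (A : J → Type) [∀ j, LinearOrder (A j)],
        ∀ cA : ∀ j, ι → Set (A j),
          (∀ j, CLOEquiv ι (A j) (cA j) M c) →
          (∀ j, IsElemMap ι (cA j) (sigmaColor cA) fun a => toLex ⟨j, a⟩) ∧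
            CLOEquiv ι (Σₗ j, A j) (sigmaColor cA) M c) := by
  constructor
  · intro h J _ _ A _ cA hA
    have hE (j k : J) := (hA j).trans (hA k).symm
    have hsa (j : J) : SelfAdditive ι (A j) (cA j) := .of_cloEquiv ⟨hM, h⟩ (hA j).symm
    refine ⟨fun j _ φ v => (sat_lexIncl_iff hsa hE φ v).symm, ?_⟩
    obtain ⟨j⟩ := ‹Nonempty J›
    refine (cloEquiv_iff.2 fun φ => ?_).trans (hA j)
    rw [← sat_lexIncl_iff hsa hE φ, Subsingleton.elim (lexIncl j ∘ Empty.elim)]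
  · intro h
    obtain ⟨hmap, hsum⟩ := h Bool (fun _ => M) (fun _ => c) fun _ => .refl c
    exact (selfAdditive_of_isElemMap hmap hsum).2

theorem stmt6 {ι : Type} [Countable ι] {M : Type} [LinearOrder M] (c : ι → Set M)
    (hM : Nontrivial M) :
    (∀ φ : (CLOLang ι).Formula Unit, (FmlSet ι M c φ).OrdConnected →
        FmlSet ι M c φ = ∅ ∨ FmlSet ι M c φ = Set.univ) ↔
      (∀ (J : Type) [LinearOrder J] [Nonempty J], ∀ (A : J → Type) [∀ j, LinearOrder (A j)],
        ∀ cA : ∀ j, ι → Set (A j),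
          (∀ j, CLOEquiv ι (A j) (cA j) M c) →
          (∀ j, IsElemMap ι (cA j) (sigmaColor cA) fun a => toLex ⟨j, a⟩) ∧
            CLOEquiv ι (Σₗ j, A j) (sigmaColor cA) M c) :=
  stmt6_general c hM
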